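/- Fix λ0 ∈ ℝ and let g be an exchangeable prior with 0 < ∫ τ′τ g(dτ) < ∞. For any design d and any generalized inverse G of A_{d22}, one has ∫ τ′ A_d(G) τ g(dτ) = (∫ τ′τ g(dτ)) · tr(A_d(G))/(t−1); in particular this value is independent of the choice of G. Moreover, d maximizes φ_{g,λ0}(d′) = ∫ τ′ A_{d′}(G′) τ g(dτ) over all designs d′ (and all generalized inverses G′ of A_{d′22}) if and only if tr(A_d(G)) = n y_0. -/

import Mathlib

open Matrix MeasureTheory
open scoped Classical

noncomputable section

/-- A treatment sequence: assigns a treatment in `Fin t` to each period in `Fin p`. -/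
abbrev TrtSeq (p t : ℕ) := Fin p → Fin t

/-- Treatment/period incidence matrix `T_s`. -/
def Tmat {p t : ℕ} (s : TrtSeq p t) : Matrix (Fin p) (Fin t) ℝ :=
  Matrix.of fun k i => if s k = i then 1 else 0

/-- Carryover incidence matrix `F_s`: first row zero, row `k` records the treatment
in period `k-1`. -/
def Fmat {p t : ℕ} (s : TrtSeq p t) : Matrix (Fin p) (Fin t) ℝ :=
  Matrix.of fun k i =>
    if (k : ℕ) = 0 then 0
    else if s ⟨(k : ℕ) - 1, Nat.lt_of_le_of_lt (Nat.sub_le _ _) k.isLt⟩ = i then 1 else 0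

/-- The all-ones `m × m` matrix `J_m`. -/
def Jmat (m : ℕ) : Matrix (Fin m) (Fin m) ℝ := Matrix.of fun _ _ => 1

/-- `B_t = I_t - J_t / t`. -/
def Bmat (t : ℕ) : Matrix (Fin t) (Fin t) ℝ := 1 - ((t : ℝ))⁻¹ • Jmat t

/-- `B̃ = Σ⁻¹ - Σ⁻¹ J_p Σ⁻¹ / (1_p' Σ⁻¹ 1_p)`. -/
def Btil {p : ℕ} (S : Matrix (Fin p) (Fin p) ℝ) : Matrix (Fin p) (Fin p) ℝ :=
  S⁻¹ - (((fun _ => (1 : ℝ)) : Fin p → ℝ) ⬝ᵥ (S⁻¹ *ᵥ fun _ => (1 : ℝ)))⁻¹ •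
    (S⁻¹ * Jmat p * S⁻¹)

/-- `G_1(s) = T_s`, `G_2(s) = F_s`. -/
def Gmat {p t : ℕ} (i : Fin 2) (s : TrtSeq p t) : Matrix (Fin p) (Fin t) ℝ :=
  if i = 0 then Tmat s else Fmat s

/-- An approximate design: nonnegative weights summing to one. -/
def IsDesign {p t : ℕ} (w : TrtSeq p t → ℝ) : Prop :=
  (∀ s, 0 ≤ w s) ∧ ∑ s : TrtSeq p t, w s = 1

/-- `Ĉ_{sij} = B_t G_i(s)' B̃ G_j(s) B_t`. -/
def Chat {p t : ℕ} (S : Matrix (Fin p) (Fin p) ℝ) (s : TrtSeq p t) (i j : Fin 2) :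
    Matrix (Fin t) (Fin t) ℝ :=
  Bmat t * (Gmat i s)ᵀ * Btil S * Gmat j s * Bmat t

/-- `c_{sij} = tr Ĉ_{sij}`. -/
def cseq {p t : ℕ} (S : Matrix (Fin p) (Fin p) ℝ) (s : TrtSeq p t) (i j : Fin 2) : ℝ :=
  (Chat S s i j).trace

/-- `Ĉ_{dij} = n ∑_s p_s Ĉ_{sij}`. -/
def ChatD {p t : ℕ} (n : ℕ) (S : Matrix (Fin p) (Fin p) ℝ) (w : TrtSeq p t → ℝ)
    (i j : Fin 2) : Matrix (Fin t) (Fin t) ℝ :=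
  (n : ℝ) • ∑ s : TrtSeq p t, w s • Chat S s i j

/-- `C_{dij} = Ĉ_{dij} - n (∑_s p_s G_i(s) B_t)' B̃ (∑_s p_s G_j(s) B_t)`. -/
def CD {p t : ℕ} (n : ℕ) (S : Matrix (Fin p) (Fin p) ℝ) (w : TrtSeq p t → ℝ)
    (i j : Fin 2) : Matrix (Fin t) (Fin t) ℝ :=
  ChatD n S w i j -
    (n : ℝ) • ((∑ s : TrtSeq p t, w s • (Gmat i s * Bmat t))ᵀ * Btil S *
      (∑ s : TrtSeq p t, w s • (Gmat j s * Bmat t)))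

/-- `c_{dij} = tr Ĉ_{dij} = n ∑_s p_s c_{sij}`. -/
def cD {p t : ℕ} (n : ℕ) (S : Matrix (Fin p) (Fin p) ℝ) (w : TrtSeq p t → ℝ)
    (i j : Fin 2) : ℝ :=
  (ChatD n S w i j).trace

/-- Fisher information matrix `C_{d,τ0,λ0}` for the direct treatment effects under the
proportional model. -/
def CInfo {p t : ℕ} (n : ℕ) (S : Matrix (Fin p) (Fin p) ℝ) (w : TrtSeq p t → ℝ)
    (τ0 : Fin t → ℝ) (l0 : ℝ) : Matrix (Fin t) (Fin t) ℝ :=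
  CD n S w 0 0 + l0 • (CD n S w 0 1 + CD n S w 1 0) + (l0 ^ 2) • CD n S w 1 1 -
    (τ0 ⬝ᵥ (CD n S w 1 1 *ᵥ τ0))⁻¹ •
      ((CD n S w 0 1 + l0 • CD n S w 1 1) * vecMulVec τ0 τ0 *
        (CD n S w 1 0 + l0 • CD n S w 1 1))

/-- Permutation matrix `S_σ` with `(S_σ)_{j,i} = 1` iff `i = σ j`. -/
def Smat {t : ℕ} (σ : Equiv.Perm (Fin t)) : Matrix (Fin t) (Fin t) ℝ :=
  Matrix.of fun j i => if i = σ j then 1 else 0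

/-- The relabelled sequence `σ ∘ s`. -/
def permSeq {p t : ℕ} (σ : Equiv.Perm (Fin t)) (s : TrtSeq p t) : TrtSeq p t := fun k => σ (s k)

/-- The design `σ d`, with weights `(σd)_s = p_{σ⁻¹ ∘ s}`. -/
def permDesign {p t : ℕ} (σ : Equiv.Perm (Fin t)) (w : TrtSeq p t → ℝ) : TrtSeq p t → ℝ :=
  fun s => w (permSeq σ⁻¹ s)

/-- A design is symmetric if its weights are invariant under treatment relabelling. -/
def IsSymmetricDesign {p t : ℕ} (w : TrtSeq p t → ℝ) : Prop :=
  ∀ (σ : Equiv.Perm (Fin t)) (s : TrtSeq p t), w (permSeq σ s) = w s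

/-- The symmetrized design `d*` with weights `p*_s = (1/t!) ∑_σ p_{σ⁻¹ ∘ s}`. -/
def symmetrize {p t : ℕ} (w : TrtSeq p t → ℝ) : TrtSeq p t → ℝ :=
  fun s => ((Nat.factorial t : ℝ))⁻¹ * ∑ σ : Equiv.Perm (Fin t), permDesign σ w s

/-- `q_s(x) = c_{s11} + 2 c_{s12} x + c_{s22} x²`. -/
def qSeq {p t : ℕ} (S : Matrix (Fin p) (Fin p) ℝ) (s : TrtSeq p t) (x : ℝ) : ℝ :=
  cseq S s 0 0 + 2 * cseq S s 0 1 * x + cseq S s 1 1 * x ^ 2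

/-- `q(x) = max_{s ∈ S} q_s(x)`. -/
def qMax (p t : ℕ) (S : Matrix (Fin p) (Fin p) ℝ) (x : ℝ) : ℝ :=
  sSup (Set.range fun s : TrtSeq p t => qSeq S s x)

/-- `y* = inf_x q(x)`. -/
def yStar (p t : ℕ) (S : Matrix (Fin p) (Fin p) ℝ) : ℝ := ⨅ x : ℝ, qMax p t S x

/-- `q_d(x) = ∑_s p_s q_s(x)`. -/
def qD {p t : ℕ} (S : Matrix (Fin p) (Fin p) ℝ) (w : TrtSeq p t → ℝ) (x : ℝ) : ℝ :=
  ∑ s : TrtSeq p t, w s * qSeq S s x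

/-- `x_d = -c_{d12}/c_{d22}`. -/
def xD {p t : ℕ} (n : ℕ) (S : Matrix (Fin p) (Fin p) ℝ) (w : TrtSeq p t → ℝ) : ℝ :=
  -(cD n S w 0 1) / cD n S w 1 1

/-- An exchangeable prior: a probability measure on `{τ : 1'τ = 0, τ ≠ 0}` that is
invariant under all coordinate permutations of `ℝ^t`. -/
def IsExchangeablePrior {t : ℕ} (g : Measure (Fin t → ℝ)) : Prop :=
  IsProbabilityMeasure g ∧
    g {τ : Fin t → ℝ | ¬((∑ i, τ i) = 0 ∧ τ ≠ 0)} = 0 ∧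
    ∀ σ : Equiv.Perm (Fin t), Measure.map (fun τ i => τ (σ i)) g = g

/-- `m_d(τ0) = min {ℓ' C_{d,τ0,λ0} ℓ : 1'ℓ = 0, ℓ'ℓ = 1}`. -/
def mD {p t : ℕ} (n : ℕ) (S : Matrix (Fin p) (Fin p) ℝ) (w : TrtSeq p t → ℝ) (l0 : ℝ)
    (τ0 : Fin t → ℝ) : ℝ :=
  sInf {v : ℝ | ∃ l : Fin t → ℝ, (∑ i, l i) = 0 ∧ l ⬝ᵥ l = 1 ∧
    v = l ⬝ᵥ (CInfo n S w τ0 l0 *ᵥ l)}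

/-- The E-criterion value `E_{g,λ0}(d) = ∫ m_d(τ0) g(dτ0)`. -/
def Ecrit {p t : ℕ} (n : ℕ) (S : Matrix (Fin p) (Fin p) ℝ) (g : Measure (Fin t → ℝ))
    (l0 : ℝ) (w : TrtSeq p t → ℝ) : ℝ :=
  ∫ τ0, mD n S w l0 τ0 ∂g

/-- Competing designs for E-optimality: designs with a.e. positive `τ0' C_{d22} τ0`
and `g`-integrable `m_d`. -/
def EAdmissible {p t : ℕ} (n : ℕ) (S : Matrix (Fin p) (Fin p) ℝ) (g : Measure (Fin t → ℝ))
    (l0 : ℝ) (w : TrtSeq p t → ℝ) : Prop :=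
  IsDesign w ∧ (∀ᵐ τ0 ∂g, 0 < τ0 ⬝ᵥ (CD n S w 1 1 *ᵥ τ0)) ∧
    Integrable (mD n S w l0) g

/-- `d` is `E_{g,λ0}`-optimal. -/
def EOptimal {p t : ℕ} (n : ℕ) (S : Matrix (Fin p) (Fin p) ℝ) (g : Measure (Fin t → ℝ))
    (l0 : ℝ) (w : TrtSeq p t → ℝ) : Prop :=
  ∀ w' : TrtSeq p t → ℝ, EAdmissible n S g l0 w' → Ecrit n S g l0 w' ≤ Ecrit n S g l0 w

/-- A pseudo symmetric design: treatments equireplicated in each period,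
and all `C_{dij}` completely symmetric. -/
def IsPseudoSymmetric {p t : ℕ} (n : ℕ) (S : Matrix (Fin p) (Fin p) ℝ)
    (w : TrtSeq p t → ℝ) : Prop :=
  (∀ (k : Fin p) (i : Fin t),
    (∑ s ∈ Finset.univ.filter fun s : TrtSeq p t => s k = i, w s) = 1 / (t : ℝ)) ∧
  ∀ i j : Fin 2, ∃ a b : ℝ, CD n S w i j = a • (1 : Matrix (Fin t) (Fin t) ℝ) + b • Jmat t

/-- Eigenvalues of a (Hermitian) matrix sorted increasingly with multiplicity. -/
def sortedEigs {t : ℕ} (C : Matrix (Fin t) (Fin t) ℝ) : Fin t → ℝ :=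
  if h : C.IsHermitian then (fun i => h.eigenvalues (Tuple.sort h.eigenvalues i))
  else fun _ => 0

/-- `Φ_D(C) = (∏_{i=1}^{t-1} a_i)^{1/(t-1)}` (eigenvalues sorted increasingly). -/
def PhiD {t : ℕ} (C : Matrix (Fin t) (Fin t) ℝ) : ℝ :=
  (∏ i ∈ Finset.univ.filter fun i : Fin t => (i : ℕ) ≠ 0, sortedEigs C i) ^ (((t : ℝ) - 1)⁻¹)

/-- `Φ_A(C) = (t-1)(∑_{i=1}^{t-1} a_i⁻¹)⁻¹` if `a_1 > 0`, else `0`. -/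
def PhiA {t : ℕ} (C : Matrix (Fin t) (Fin t) ℝ) : ℝ :=
  if ∀ i : Fin t, (i : ℕ) ≠ 0 → 0 < sortedEigs C i then
    ((t : ℝ) - 1) *
      (∑ i ∈ Finset.univ.filter fun i : Fin t => (i : ℕ) ≠ 0, (sortedEigs C i)⁻¹)⁻¹
  else 0

/-- `Φ_T(C) = tr(C)/(t-1)`. -/
def PhiT {t : ℕ} (C : Matrix (Fin t) (Fin t) ℝ) : ℝ := C.trace / ((t : ℝ) - 1)

/-- The criterion value `∫ Φ(C_{d,τ0,λ0}) g(dτ0)`. -/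
def PhiCrit {p t : ℕ} (n : ℕ) (S : Matrix (Fin p) (Fin p) ℝ)
    (Phi : Matrix (Fin t) (Fin t) ℝ → ℝ) (g : Measure (Fin t → ℝ)) (l0 : ℝ)
    (w : TrtSeq p t → ℝ) : ℝ :=
  ∫ τ0, Phi (CInfo n S w τ0 l0) ∂g

/-- Competing designs for a `Φ`-criterion. -/
def PhiAdmissible {p t : ℕ} (n : ℕ) (S : Matrix (Fin p) (Fin p) ℝ)
    (Phi : Matrix (Fin t) (Fin t) ℝ → ℝ) (g : Measure (Fin t → ℝ)) (l0 : ℝ)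
    (w : TrtSeq p t → ℝ) : Prop :=
  IsDesign w ∧ (∀ᵐ τ0 ∂g, 0 < τ0 ⬝ᵥ (CD n S w 1 1 *ᵥ τ0)) ∧
    Integrable (fun τ0 => Phi (CInfo n S w τ0 l0)) g

/-- `d` is `Φ_{g,λ0}`-optimal. -/
def PhiOptimal {p t : ℕ} (n : ℕ) (S : Matrix (Fin p) (Fin p) ℝ)
    (Phi : Matrix (Fin t) (Fin t) ℝ → ℝ) (g : Measure (Fin t → ℝ)) (l0 : ℝ)
    (w : TrtSeq p t → ℝ) : Prop :=
  ∀ w' : TrtSeq p t → ℝ, PhiAdmissible n S Phi g l0 w' →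
    PhiCrit n S Phi g l0 w' ≤ PhiCrit n S Phi g l0 w

/-- `H_1(s) = F_s`, `H_2(s) = T_s + λ0 F_s` (for estimating `λ`). -/
def Hmat {p t : ℕ} (l0 : ℝ) (i : Fin 2) (s : TrtSeq p t) : Matrix (Fin p) (Fin t) ℝ :=
  if i = 0 then Fmat s else Tmat s + l0 • Fmat s

/-- `Â_{sij} = B_t H_i(s)' B̃ H_j(s) B_t`. -/
def Ahat {p t : ℕ} (S : Matrix (Fin p) (Fin p) ℝ) (l0 : ℝ) (s : TrtSeq p t) (i j : Fin 2) :
    Matrix (Fin t) (Fin t) ℝ :=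
  Bmat t * (Hmat l0 i s)ᵀ * Btil S * Hmat l0 j s * Bmat t

/-- `h_{sij} = tr Â_{sij}`. -/
def hseq {p t : ℕ} (S : Matrix (Fin p) (Fin p) ℝ) (l0 : ℝ) (s : TrtSeq p t) (i j : Fin 2) : ℝ :=
  (Ahat S l0 s i j).trace

/-- `Â_{dij} = n ∑_s p_s Â_{sij}`. -/
def AhatD {p t : ℕ} (n : ℕ) (S : Matrix (Fin p) (Fin p) ℝ) (l0 : ℝ) (w : TrtSeq p t → ℝ)
    (i j : Fin 2) : Matrix (Fin t) (Fin t) ℝ :=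
  (n : ℝ) • ∑ s : TrtSeq p t, w s • Ahat S l0 s i j

/-- `A_{dij} = Â_{dij} - n (∑_s p_s H_i(s) B_t)' B̃ (∑_s p_s H_j(s) B_t)`. -/
def AD {p t : ℕ} (n : ℕ) (S : Matrix (Fin p) (Fin p) ℝ) (l0 : ℝ) (w : TrtSeq p t → ℝ)
    (i j : Fin 2) : Matrix (Fin t) (Fin t) ℝ :=
  AhatD n S l0 w i j -
    (n : ℝ) • ((∑ s : TrtSeq p t, w s • (Hmat l0 i s * Bmat t))ᵀ * Btil S *
      (∑ s : TrtSeq p t, w s • (Hmat l0 j s * Bmat t)))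

/-- `G` is a generalized inverse of `A`. -/
def IsGInv {t : ℕ} (A G : Matrix (Fin t) (Fin t) ℝ) : Prop := A * G * A = A

/-- `A_d(G) = A_{d11} - A_{d12} G A_{d21}` with `A_{d21} = A_{d12}'`. -/
def ADfun {p t : ℕ} (n : ℕ) (S : Matrix (Fin p) (Fin p) ℝ) (l0 : ℝ) (w : TrtSeq p t → ℝ)
    (G : Matrix (Fin t) (Fin t) ℝ) : Matrix (Fin t) (Fin t) ℝ :=
  AD n S l0 w 0 0 - AD n S l0 w 0 1 * G * (AD n S l0 w 0 1)ᵀ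

/-- `r_s(x) = h_{s11} + 2 h_{s12} x + h_{s22} x²`. -/
def rSeq {p t : ℕ} (S : Matrix (Fin p) (Fin p) ℝ) (l0 : ℝ) (s : TrtSeq p t) (x : ℝ) : ℝ :=
  hseq S l0 s 0 0 + 2 * hseq S l0 s 0 1 * x + hseq S l0 s 1 1 * x ^ 2

/-- `r(x) = max_s r_s(x)`. -/
def rMax (p t : ℕ) (S : Matrix (Fin p) (Fin p) ℝ) (l0 : ℝ) (x : ℝ) : ℝ :=
  sSup (Set.range fun s : TrtSeq p t => rSeq S l0 s x)

/-- `y_0 = inf_x r(x)`. -/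
def yZero (p t : ℕ) (S : Matrix (Fin p) (Fin p) ℝ) (l0 : ℝ) : ℝ := ⨅ x : ℝ, rMax p t S l0 x

section Helpers

lemma trace_tmul_nonneg {m k : Type*} [Fintype m] [Fintype k] (Y : Matrix m k ℝ) :
    0 ≤ (Yᵀ * Y).trace := by
  simp only [Matrix.trace, Matrix.diag, Matrix.mul_apply, Matrix.transpose_apply]
  exact Finset.sum_nonneg fun i _ => Finset.sum_nonneg fun j _ => mul_self_nonneg _

lemma ginv_right {m k : Type*} [Fintype m] [Fintype k] [DecidableEq k] (Y : Matrix m k ℝ)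
    (G : Matrix k k ℝ) (h : Yᵀ * Y * G * (Yᵀ * Y) = Yᵀ * Y) : Y * G * (Yᵀ * Y) = Y := by
  have h1 : Yᴴ * Y * (G * (Yᵀ * Y) - 1) = 0 := by
    rw [Matrix.conjTranspose_eq_transpose_of_trivial, Matrix.mul_sub, ← Matrix.mul_assoc, h]
    simp
  rw [Matrix.conjTranspose_mul_self_mul_eq_zero] at h1
  rw [Matrix.mul_sub, sub_eq_zero] at h1
  simpa [Matrix.mul_assoc] using h1

lemma ginv_transpose {m k : Type*} [Fintype m] [Fintype k] [DecidableEq k] (Y : Matrix m k ℝ)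
    (G : Matrix k k ℝ) (h : Yᵀ * Y * G * (Yᵀ * Y) = Yᵀ * Y) :
    Yᵀ * Y * Gᵀ * (Yᵀ * Y) = Yᵀ * Y := by
  have := congrArg Matrix.transpose h
  simpa [Matrix.transpose_mul, Matrix.mul_assoc] using this

lemma ginv_left {m k : Type*} [Fintype m] [Fintype k] [DecidableEq k] (Y : Matrix m k ℝ)
    (G : Matrix k k ℝ) (h : Yᵀ * Y * G * (Yᵀ * Y) = Yᵀ * Y) : Yᵀ * Y * G * Yᵀ = Yᵀ := by
  have := congrArg Matrix.transpose (ginv_right Y Gᵀ (ginv_transpose Y G h))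
  simpa [Matrix.transpose_mul, Matrix.mul_assoc] using this

lemma ginv_proj_unique {m k : Type*} [Fintype m] [Fintype k] [DecidableEq k] (Y : Matrix m k ℝ)
    (G G' : Matrix k k ℝ) (h : Yᵀ * Y * G * (Yᵀ * Y) = Yᵀ * Y)
    (h' : Yᵀ * Y * G' * (Yᵀ * Y) = Yᵀ * Y) : Y * G * Yᵀ = Y * G' * Yᵀ := by
  calc Y * G * Yᵀ = Y * G * (Yᵀ * Y * G' * Yᵀ) := by rw [ginv_left Y G' h']
    _ = (Y * G * (Yᵀ * Y)) * G' * Yᵀ := by simp only [Matrix.mul_assoc]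
    _ = _ := by rw [ginv_right Y G h]

lemma schur_le {m k : Type*} [Fintype m] [Fintype k] [DecidableEq k] (Y1 Y2 : Matrix m k ℝ)
    (G : Matrix k k ℝ) (h : Y2ᵀ * Y2 * G * (Y2ᵀ * Y2) = Y2ᵀ * Y2) (x : ℝ) :
    (Y1ᵀ * Y1 - Y1ᵀ * Y2 * G * (Y1ᵀ * Y2)ᵀ).trace ≤
      (Y1ᵀ * Y1).trace + 2 * (Y1ᵀ * Y2).trace * x + (Y2ᵀ * Y2).trace * x ^ 2 := by
  set P := Y2 * G * Y2ᵀ with hP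
  have hPT : Pᵀ = P := by
    rw [ginv_proj_unique Y2 G Gᵀ h (ginv_transpose Y2 G h)] at hP
    rw [hP, ginv_proj_unique Y2 Gᵀ G (ginv_transpose Y2 G h) h]
    simp [Matrix.transpose_mul, Matrix.mul_assoc]
    have := ginv_proj_unique Y2 Gᵀ G (ginv_transpose Y2 G h) h
    simpa [Matrix.mul_assoc] using this
  have hPY : P * Y2 = Y2 := by
    have := ginv_right Y2 G h
    simpa [hP, Matrix.mul_assoc] using this
  have hYP : Y2ᵀ * P = Y2ᵀ := by
    have := ginv_left Y2 G h
    simpa [hP, Matrix.mul_assoc] using this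
  have hPP : P * P = P := by
    nth_rewrite 1 [hP]
    rw [Matrix.mul_assoc, hYP]
  have h0 := trace_tmul_nonneg (P * (Y1 + x • Y2))
  have e : (P * (Y1 + x • Y2))ᵀ * (P * (Y1 + x • Y2)) =
      Y1ᵀ * P * Y1 + x • (Y1ᵀ * Y2) + x • (Y2ᵀ * Y1) + x ^ 2 • (Y2ᵀ * Y2) := by
    rw [Matrix.transpose_mul, hPT, Matrix.mul_assoc, ← Matrix.mul_assoc P P, hPP, Matrix.mul_add,
      Matrix.mul_smul, hPY, Matrix.transpose_add, Matrix.transpose_smul, Matrix.add_mul,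
      Matrix.mul_add, Matrix.mul_add, Matrix.smul_mul, ← Matrix.mul_assoc Y2ᵀ P, hYP]
    simp only [Matrix.mul_smul, Matrix.smul_mul, smul_smul, Matrix.mul_assoc, pow_two]
    abel
  have e2 : Y1ᵀ * Y2 * G * (Y1ᵀ * Y2)ᵀ = Y1ᵀ * P * Y1 := by
    simp [hP, Matrix.transpose_mul, Matrix.mul_assoc]
  have e3 : (Y2ᵀ * Y1).trace = (Y1ᵀ * Y2).trace := by
    rw [← Matrix.trace_transpose]; simp
  rw [e] at h0
  simp only [Matrix.trace_add, Matrix.trace_smul, smul_eq_mul, e3] at h0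
  rw [e2, Matrix.trace_sub]
  nlinarith

lemma schur_unique {m k : Type*} [Fintype m] [Fintype k] [DecidableEq k] (Y1 Y2 : Matrix m k ℝ)
    (G G' : Matrix k k ℝ) (h : Y2ᵀ * Y2 * G * (Y2ᵀ * Y2) = Y2ᵀ * Y2)
    (h' : Y2ᵀ * Y2 * G' * (Y2ᵀ * Y2) = Y2ᵀ * Y2) :
    Y1ᵀ * Y2 * G * (Y1ᵀ * Y2)ᵀ = Y1ᵀ * Y2 * G' * (Y1ᵀ * Y2)ᵀ := by
  have := congrArg (fun M => Y1ᵀ * M * Y1) (ginv_proj_unique Y2 G G' h h')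
  simpa [Matrix.transpose_mul, Matrix.mul_assoc] using this

lemma Jmat_mul_Jmat (m : ℕ) (V : Matrix (Fin m) (Fin m) ℝ) :
    Jmat m * V * Jmat m =
      (((fun _ => (1 : ℝ)) : Fin m → ℝ) ⬝ᵥ (V *ᵥ fun _ => (1 : ℝ))) • Jmat m := by
  ext i j
  simp [Jmat, Matrix.mul_apply, dotProduct, Matrix.mulVec]
  rw [Finset.sum_comm]

lemma Btil_gram {p : ℕ} (S : Matrix (Fin p) (Fin p) ℝ) (hS : S.PosDef) :
    ∃ L : Matrix (Fin p) (Fin p) ℝ, Btil S = Lᵀ * L := by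
  have hV := hS.inv.posSemidef
  have hVT : (S⁻¹)ᵀ = S⁻¹ := by
    have := hV.1
    rwa [Matrix.IsHermitian, Matrix.conjTranspose_eq_transpose_of_trivial] at this
  have hJT : (Jmat p)ᵀ = Jmat p := by ext i j; simp [Jmat]
  obtain ⟨L, hL⟩ : ∃ L : Matrix (Fin p) (Fin p) ℝ, S⁻¹ = Lᵀ * L := by
    open scoped MatrixOrder in
    obtain ⟨L, hL⟩ := CStarAlgebra.nonneg_iff_eq_star_mul_self.mp hV.nonneg
    exact ⟨L, by simpa [Matrix.star_eq_conjTranspose,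
      Matrix.conjTranspose_eq_transpose_of_trivial] using hL⟩
  set c := ((fun _ => (1 : ℝ)) : Fin p → ℝ) ⬝ᵥ (S⁻¹ *ᵥ fun _ => (1 : ℝ)) with hc
  refine ⟨L * (1 - c⁻¹ • (Jmat p * S⁻¹)), ?_⟩
  have hJ := Jmat_mul_Jmat p S⁻¹
  rw [← hc] at hJ
  rw [Matrix.transpose_mul, Matrix.mul_assoc, ← Matrix.mul_assoc Lᵀ, ← hL]
  simp only [Matrix.transpose_sub, Matrix.transpose_one, Matrix.transpose_smul,
    Matrix.transpose_mul, hVT, hJT, Matrix.sub_mul, Matrix.mul_sub, Matrix.one_mul, Matrix.mul_one,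
    Matrix.smul_mul, Matrix.mul_smul, smul_sub]
  have e : S⁻¹ * Jmat p * (S⁻¹ * (Jmat p * S⁻¹)) = c • (S⁻¹ * Jmat p * S⁻¹) := by
    calc _ = S⁻¹ * (Jmat p * S⁻¹ * Jmat p) * S⁻¹ := by simp only [Matrix.mul_assoc]
      _ = _ := by rw [hJ]; simp
  rw [e, Btil, ← hc]
  by_cases h0 : c = 0
  · simp [h0]
  · simp [smul_smul, h0, Matrix.mul_assoc]

lemma quad_nonneg {p k : Type*} [Fintype p] [Fintype k] (Q L : Matrix p p ℝ) (hQ : Q = Lᵀ * L)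
    (M0 M1 : Matrix p k ℝ) (x : ℝ) :
    0 ≤ (M0ᵀ * Q * M0).trace + 2 * (M0ᵀ * Q * M1).trace * x + (M1ᵀ * Q * M1).trace * x ^ 2 := by
  have h0 := trace_tmul_nonneg (L * (M0 + x • M1))
  have e : (L * (M0 + x • M1))ᵀ * (L * (M0 + x • M1)) =
      M0ᵀ * Q * M0 + x • (M0ᵀ * Q * M1) + x • (M1ᵀ * Q * M0) + x ^ 2 • (M1ᵀ * Q * M1) := by
    subst hQ
    simp only [Matrix.transpose_mul, Matrix.transpose_add, Matrix.transpose_smul, Matrix.mul_add,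
      Matrix.add_mul, Matrix.mul_smul, Matrix.smul_mul, smul_smul, Matrix.mul_assoc, pow_two,
      smul_add]
    abel
  have e3 : (M1ᵀ * Q * M0).trace = (M0ᵀ * Q * M1).trace := by
    rw [← Matrix.trace_transpose]; subst hQ; simp [Matrix.mul_assoc]
  rw [e] at h0
  simp only [Matrix.trace_add, Matrix.trace_smul, smul_eq_mul, e3] at h0
  nlinarith

lemma Bmat_transpose (t : ℕ) : (Bmat t)ᵀ = Bmat t := by
  ext i j; simp [Bmat, Jmat, Matrix.one_apply, eq_comm]

lemma Bmat_mul_Bmat (t : ℕ) : Bmat t * Bmat t = Bmat t := by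
  have hJ : Jmat t * Jmat t = (t : ℝ) • Jmat t := by
    ext i j; simp [Jmat, Matrix.mul_apply]
  rw [Bmat]
  simp only [Matrix.sub_mul, Matrix.mul_sub, Matrix.one_mul, Matrix.mul_one, Matrix.smul_mul,
    Matrix.mul_smul, hJ]
  by_cases h : (t : ℝ) = 0
  · simp [h]
  · simp [smul_smul, h]

lemma Bmat_trace (t : ℕ) (ht : 3 ≤ t) : (Bmat t).trace = (t : ℝ) - 1 := by
  have : (t : ℝ) ≠ 0 := by positivity
  simp [Bmat, Jmat, Matrix.trace, this]

/-- The centred incidence matrix. -/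
def Xmat {p t : ℕ} (l0 : ℝ) (i : Fin 2) (s : TrtSeq p t) : Matrix (Fin p) (Fin t) ℝ :=
  Hmat l0 i s * Bmat t

lemma Ahat_eq {p t : ℕ} (S : Matrix (Fin p) (Fin p) ℝ) (l0 : ℝ) (s : TrtSeq p t) (i j : Fin 2) :
    Ahat S l0 s i j = (Xmat l0 i s)ᵀ * Btil S * Xmat l0 j s := by
  simp [Ahat, Xmat, Matrix.transpose_mul, Bmat_transpose, Matrix.mul_assoc]

/-- The mean centred incidence matrix. -/
def Mmat {p t : ℕ} (l0 : ℝ) (w : TrtSeq p t → ℝ) (i : Fin 2) : Matrix (Fin p) (Fin t) ℝ :=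
  ∑ s : TrtSeq p t, w s • Xmat l0 i s

lemma AD_eq {p t : ℕ} (n : ℕ) (S : Matrix (Fin p) (Fin p) ℝ) (l0 : ℝ) (w : TrtSeq p t → ℝ)
    (i j : Fin 2) : AD n S l0 w i j =
      (n : ℝ) • (∑ s : TrtSeq p t, w s • ((Xmat l0 i s)ᵀ * Btil S * Xmat l0 j s)) -
      (n : ℝ) • ((Mmat l0 w i)ᵀ * Btil S * Mmat l0 w j) := by
  simp only [AD, AhatD, Ahat_eq]
  rfl

lemma AD_gram {p t : ℕ} (n : ℕ) (S : Matrix (Fin p) (Fin p) ℝ) (hS : S.PosDef) (l0 : ℝ)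
    (w : TrtSeq p t → ℝ) (hw : IsDesign w) :
    ∃ Y : Fin 2 → Matrix (TrtSeq p t × Fin p) (Fin t) ℝ,
      ∀ i j, AD n S l0 w i j = (Y i)ᵀ * Y j := by
  obtain ⟨L, hL⟩ := Btil_gram S hS
  refine ⟨fun i => Matrix.of fun a b =>
    Real.sqrt (n * w a.1) * (L * (Xmat l0 i a.1 - Mmat l0 w i)) a.2 b, fun i j => ?_⟩
  have h1 : ∀ i j : Fin 2, (Matrix.of fun (a : TrtSeq p t × Fin p) b =>
      Real.sqrt (n * w a.1) * (L * (Xmat l0 i a.1 - Mmat l0 w i)) a.2 b)ᵀ *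
      (Matrix.of fun (a : TrtSeq p t × Fin p) b =>
      Real.sqrt (n * w a.1) * (L * (Xmat l0 j a.1 - Mmat l0 w j)) a.2 b) =
      ∑ s : TrtSeq p t, ((n : ℝ) * w s) • ((L * (Xmat l0 i s - Mmat l0 w i))ᵀ *
        (L * (Xmat l0 j s - Mmat l0 w j))) := by
    intro i j
    ext a b
    rw [Matrix.mul_apply, Matrix.sum_apply, Fintype.sum_prod_type]
    refine Finset.sum_congr rfl fun s _ => ?_
    rw [Matrix.smul_apply, Matrix.mul_apply, Finset.smul_sum]
    refine Finset.sum_congr rfl fun k _ => ?_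
    simp only [Matrix.transpose_apply, Matrix.of_apply, smul_eq_mul]
    have := Real.mul_self_sqrt (mul_nonneg (Nat.cast_nonneg (α := ℝ) n) (hw.1 s))
    linear_combination (L * (Xmat l0 i s - Mmat l0 w i)) k a *
      (L * (Xmat l0 j s - Mmat l0 w j)) k b * this
  rw [h1, AD_eq]
  set Q := Btil S
  have h2 : ∀ s : TrtSeq p t, ((n : ℝ) * w s) • ((L * (Xmat l0 i s - Mmat l0 w i))ᵀ *
        (L * (Xmat l0 j s - Mmat l0 w j))) =
      (n : ℝ) • (w s • ((Xmat l0 i s)ᵀ * Q * Xmat l0 j s))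
      - (n : ℝ) • ((w s • Xmat l0 i s)ᵀ * Q * Mmat l0 w j)
      - (n : ℝ) • ((Mmat l0 w i)ᵀ * Q * (w s • Xmat l0 j s))
      + (n : ℝ) • (w s • ((Mmat l0 w i)ᵀ * Q * Mmat l0 w j)) := by
    intro s
    rw [hL]
    simp only [Matrix.transpose_mul, Matrix.transpose_sub, Matrix.transpose_smul, Matrix.mul_sub,
      Matrix.sub_mul, Matrix.mul_smul, Matrix.smul_mul, smul_smul, Matrix.mul_assoc,
      smul_sub]
    abel
  rw [Finset.sum_congr rfl fun s _ => h2 s]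
  rw [Finset.sum_add_distrib, Finset.sum_sub_distrib, Finset.sum_sub_distrib]
  simp only [← Finset.smul_sum, ← Finset.sum_smul, ← Matrix.mul_sum, ← Matrix.sum_mul,
    ← Matrix.transpose_sum, hw.2, one_smul]
  change _ = _ - (n : ℝ) • ((Mmat l0 w i)ᵀ * Q * Mmat l0 w j)
      - (n : ℝ) • ((Mmat l0 w i)ᵀ * Q * Mmat l0 w j) + _
  abel

lemma rSeq_nonneg {p t : ℕ} (S : Matrix (Fin p) (Fin p) ℝ) (hS : S.PosDef) (l0 : ℝ)
    (s : TrtSeq p t) (x : ℝ) : 0 ≤ rSeq S l0 s x := by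
  obtain ⟨L, hL⟩ := Btil_gram S hS
  simp only [rSeq, hseq, Ahat_eq]
  exact quad_nonneg _ L hL _ _ x

lemma hseq11_nonneg {p t : ℕ} (S : Matrix (Fin p) (Fin p) ℝ) (hS : S.PosDef) (l0 : ℝ)
    (s : TrtSeq p t) : 0 ≤ hseq S l0 s 1 1 := by
  obtain ⟨L, hL⟩ := Btil_gram S hS
  simp only [hseq, Ahat_eq]
  simpa using quad_nonneg _ L hL (Xmat l0 1 s) 0 0

lemma rSeq_le_rMax {p t : ℕ} (S : Matrix (Fin p) (Fin p) ℝ) (l0 : ℝ)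
    (s : TrtSeq p t) (x : ℝ) : rSeq S l0 s x ≤ rMax p t S l0 x :=
  le_csSup (Set.finite_range _).bddAbove ⟨s, rfl⟩

lemma AD_trace_quad_le {p t : ℕ} (n : ℕ) (S : Matrix (Fin p) (Fin p) ℝ) (hS : S.PosDef) (l0 : ℝ)
    (w : TrtSeq p t → ℝ) (x : ℝ) :
    (AD n S l0 w 0 0).trace + 2 * (AD n S l0 w 0 1).trace * x + (AD n S l0 w 1 1).trace * x ^ 2 ≤
      (n : ℝ) * ∑ s, w s * rSeq S l0 s x := by
  obtain ⟨L, hL⟩ := Btil_gram S hS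
  have h := quad_nonneg _ L hL (Mmat l0 w 0) (Mmat l0 w 1) x
  simp only [AD_eq, Matrix.trace_sub, Matrix.trace_smul, Matrix.trace_sum, smul_eq_mul]
  simp only [rSeq, hseq, Ahat_eq, mul_add, Finset.sum_add_distrib]
  have e1 : ∑ s, w s * (2 * ((Xmat l0 0 s)ᵀ * Btil S * Xmat l0 1 s).trace * x) =
      2 * x * ∑ s, w s * ((Xmat l0 0 s)ᵀ * Btil S * Xmat l0 1 s).trace := by
    rw [Finset.mul_sum]; exact Finset.sum_congr rfl fun _ _ => by ring
  have e2 : ∑ s, w s * (((Xmat l0 1 s)ᵀ * Btil S * Xmat l0 1 s).trace * x ^ 2) =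
      x ^ 2 * ∑ s, w s * ((Xmat l0 1 s)ᵀ * Btil S * Xmat l0 1 s).trace := by
    rw [Finset.mul_sum]; exact Finset.sum_congr rfl fun _ _ => by ring
  rw [e1, e2]
  have := mul_nonneg (Nat.cast_nonneg (α := ℝ) n) h
  nlinarith

lemma trace_le_yZero {p t : ℕ} (n : ℕ) (S : Matrix (Fin p) (Fin p) ℝ) (hS : S.PosDef) (l0 : ℝ)
    (w : TrtSeq p t → ℝ) (hw : IsDesign w) (G : Matrix (Fin t) (Fin t) ℝ)
    (hG : IsGInv (AD n S l0 w 1 1) G) :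
    (ADfun n S l0 w G).trace ≤ (n : ℝ) * yZero p t S l0 := by
  have key : ∀ x, (ADfun n S l0 w G).trace ≤ (n : ℝ) * rMax p t S l0 x := by
    intro x
    obtain ⟨Y, hY⟩ := AD_gram n S hS l0 w hw
    have h1 : (ADfun n S l0 w G).trace ≤ (AD n S l0 w 0 0).trace +
        2 * (AD n S l0 w 0 1).trace * x + (AD n S l0 w 1 1).trace * x ^ 2 := by
      rw [IsGInv] at hG
      simp only [ADfun, hY] at hG ⊢
      exact schur_le (Y 0) (Y 1) G hG x
    refine h1.trans ((AD_trace_quad_le n S hS l0 w x).trans ?_)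
    refine mul_le_mul_of_nonneg_left ?_ (Nat.cast_nonneg n)
    calc ∑ s, w s * rSeq S l0 s x ≤ ∑ s, w s * rMax p t S l0 x :=
          Finset.sum_le_sum fun s _ => mul_le_mul_of_nonneg_left (rSeq_le_rMax S l0 s x) (hw.1 s)
      _ = rMax p t S l0 x := by rw [← Finset.sum_mul, hw.2, one_mul]
  rw [yZero, Real.mul_iInf_of_nonneg (Nat.cast_nonneg n)]
  exact le_ciInf key

lemma ADfun_unique {p t : ℕ} (n : ℕ) (S : Matrix (Fin p) (Fin p) ℝ) (hS : S.PosDef) (l0 : ℝ)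
    (w : TrtSeq p t → ℝ) (hw : IsDesign w) (G G' : Matrix (Fin t) (Fin t) ℝ)
    (hG : IsGInv (AD n S l0 w 1 1) G) (hG' : IsGInv (AD n S l0 w 1 1) G') :
    ADfun n S l0 w G = ADfun n S l0 w G' := by
  obtain ⟨Y, hY⟩ := AD_gram n S hS l0 w hw
  rw [IsGInv] at hG hG'
  simp only [ADfun, hY] at hG hG' ⊢
  rw [schur_unique (Y 0) (Y 1) G G' hG hG']

/-- Minimax: there are weights whose averaged quadratic dominates `y_0` everywhere. -/
lemma exists_minimax {p t : ℕ} (ht : 3 ≤ t) (S : Matrix (Fin p) (Fin p) ℝ) (hS : S.PosDef)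
    (l0 : ℝ) :
    ∃ w : TrtSeq p t → ℝ, IsDesign w ∧ ∀ x, yZero p t S l0 ≤ ∑ s, w s * rSeq S l0 s x := by
  by_contra! hcon
  have : Nonempty (Fin t) := ⟨⟨0, by omega⟩⟩
  let X : Set (TrtSeq p t → ℝ) := stdSimplex ℝ (TrtSeq p t)
  have hX : ∀ w, w ∈ X ↔ IsDesign w := fun w => Iff.rfl
  let f : (TrtSeq p t → ℝ) → ℝ → ℝ := fun w x => -∑ s, w s * rSeq S l0 s x
  have hc1 : ∀ x, Continuous fun w => f w x := fun x => by fun_prop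
  have hc2 : ∀ w, Continuous fun x => f w x := fun w => by
    simp only [f, rSeq]; fun_prop
  have kX : IsCompact X := isCompact_stdSimplex ℝ _
  have cX : Convex ℝ X := convex_stdSimplex ℝ _
  have neX : X.Nonempty := ⟨_, single_mem_stdSimplex ℝ (fun _ => Classical.arbitrary (Fin t))⟩
  obtain ⟨F, hF⟩ := kX.elim_finite_subcover (fun x : ℝ => {w | -yZero p t S l0 < f w x})
    (fun x => isOpen_lt continuous_const (hc1 x)) (by
      intro w hw
      obtain ⟨x, hx⟩ := hcon w ((hX w).1 hw)
      simp only [Set.mem_iUnion]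
      exact ⟨x, by simp only [f, Set.mem_ofPred_eq]; linarith⟩)
  obtain ⟨x0, -, hx0⟩ := Sion.exists_lt_iInf_of_lt_iInf_of_finite (X := X) (Y := Set.univ) (f := f)
    neX kX (fun x _ => (hc1 x).lowerSemicontinuous.lowerSemicontinuousOn _)
    (fun x _ => by
      apply ConvexOn.quasiconvexOn
      refine ⟨cX, fun a _ b _ u v _ _ _ => le_of_eq ?_⟩
      simp only [f, Pi.add_apply, Pi.smul_apply, smul_eq_mul, add_mul, Finset.sum_add_distrib,
        mul_assoc, ← Finset.mul_sum]
      ring)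
    convex_univ (fun w _ => (hc2 w).upperSemicontinuous.upperSemicontinuousOn _)
    (fun w hw => by
      apply ConcaveOn.quasiconcaveOn
      refine ⟨convex_univ, fun a _ b _ u v hu hv huv => ?_⟩
      simp only [f, smul_eq_mul, mul_neg, ← neg_add, neg_le_neg_iff, Finset.mul_sum,
        ← Finset.sum_add_distrib]
      refine Finset.sum_le_sum fun s _ => ?_
      have hw0 := ((hX w).1 hw).1 s
      have h11 := hseq11_nonneg S hS l0 s
      have hv' : v = 1 - u := by linarith
      have : 0 ≤ w s * (hseq S l0 s 1 1 * (u * v * (a - b) ^ 2)) := by positivity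
      simp only [rSeq]
      subst hv'
      nlinarith)
    cX F.finite_toSet (Set.subset_univ _) (t := -yZero p t S l0) (by
      intro w hw
      have := hF hw
      simp only [Set.mem_iUnion] at this
      obtain ⟨x, hx, h⟩ := this
      exact ⟨x, hx, h⟩)
  have hbdd : BddBelow (Set.range fun x => rMax p t S l0 x) := by
    refine ⟨0, ?_⟩
    rintro _ ⟨x, rfl⟩
    exact (rSeq_nonneg S hS l0 (fun _ => Classical.arbitrary (Fin t)) x).trans
      (rSeq_le_rMax S l0 _ x)
  have hy : yZero p t S l0 ≤ rMax p t S l0 x0 := ciInf_le hbdd x0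
  obtain ⟨s, hs⟩ : rMax p t S l0 x0 ∈ Set.range fun s : TrtSeq p t => rSeq S l0 s x0 :=
    (Set.range_nonempty _).csSup_mem (Set.finite_range _)
  have := hx0 _ (single_mem_stdSimplex ℝ s)
  simp only [f, Pi.single_apply, ite_mul, one_mul, zero_mul, Finset.sum_ite_eq',
    Finset.mem_univ, if_true] at this
  simp only at hs
  linarith

lemma exists_perm_pair {α : Type*} [DecidableEq α] {a b i j : α} (hab : a ≠ b) (hij : i ≠ j) :
    ∃ σ : Equiv.Perm α, σ a = i ∧ σ b = j := by
  refine ⟨Equiv.swap (Equiv.swap a i b) j * Equiv.swap a i, ?_, ?_⟩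
  · rw [Equiv.Perm.mul_apply, Equiv.swap_apply_left]
    refine Equiv.swap_apply_of_ne_of_ne ?_ hij
    intro h
    have : Equiv.swap a i a = Equiv.swap a i b := by rw [← h, Equiv.swap_apply_left]
    exact hab ((Equiv.swap a i).injective this)
  · rw [Equiv.Perm.mul_apply, Equiv.swap_apply_left]

lemma perm_inv_matrix {t : ℕ} (ht : 3 ≤ t) (M : Matrix (Fin t) (Fin t) ℝ)
    (hM : ∀ (σ : Equiv.Perm (Fin t)) i j, M (σ i) (σ j) = M i j) (hrow : ∀ i, ∑ j, M i j = 0) :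
    M = (M.trace / ((t : ℝ) - 1)) • Bmat t := by
  let i0 : Fin t := ⟨0, by omega⟩
  let j0 : Fin t := ⟨1, by omega⟩
  have h01 : i0 ≠ j0 := by simp [i0, j0]
  have hd : ∀ i, M i i = M i0 i0 := fun i => by
    simpa using hM (Equiv.swap i0 i) i0 i0
  have ho : ∀ i j, i ≠ j → M i j = M i0 j0 := fun i j hij => by
    obtain ⟨σ, h1, h2⟩ := exists_perm_pair h01 hij
    rw [← h1, ← h2, hM]
  have htr : M.trace = t * M i0 i0 := by simp [Matrix.trace, hd]
  have ht0 : (t : ℝ) ≠ 0 := by positivity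
  have ht1 : (t : ℝ) - 1 ≠ 0 := by
    have : (3 : ℝ) ≤ t := by exact_mod_cast ht
    linarith
  have hs : M i0 i0 + ((t : ℝ) - 1) * M i0 j0 = 0 := by
    have h := hrow i0
    rw [← Finset.add_sum_erase _ _ (Finset.mem_univ i0),
      Finset.sum_congr rfl (fun j hj => ho i0 j (Finset.ne_of_mem_erase hj).symm)] at h
    rw [Finset.sum_const, Finset.card_erase_of_mem (Finset.mem_univ _), Finset.card_univ,
      Fintype.card_fin, nsmul_eq_mul, Nat.cast_sub (by omega)] at h
    simpa using h
  have hb : M i0 j0 = -(M i0 i0) / ((t : ℝ) - 1) := by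
    field_simp; linarith
  ext i j
  rw [htr]
  by_cases hij : i = j
  · subst hij
    simp only [hd, Matrix.smul_apply, Bmat, Jmat, Matrix.sub_apply, Matrix.one_apply_eq,
      Matrix.of_apply, smul_eq_mul]
    field_simp
  · simp only [ho i j hij, hb, Matrix.smul_apply, Bmat, Jmat, Matrix.sub_apply,
      Matrix.one_apply_ne hij, Matrix.of_apply, smul_eq_mul]
    field_simp
    ring

lemma Bmat_perm {t : ℕ} (σ : Equiv.Perm (Fin t)) (i j : Fin t) :
    Bmat t (σ i) (σ j) = Bmat t i j := by
  simp [Bmat, Jmat, Matrix.one_apply]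

lemma Bmat_row {t : ℕ} (ht : 3 ≤ t) (i : Fin t) : ∑ j, Bmat t i j = 0 := by
  have : (t : ℝ) ≠ 0 := by positivity
  simp [Bmat, Jmat, Matrix.one_apply, this]

lemma Hmat_perm {p t : ℕ} (l0 : ℝ) (i : Fin 2) (σ : Equiv.Perm (Fin t)) (s : TrtSeq p t)
    (k : Fin p) (j : Fin t) : Hmat l0 i (permSeq σ s) k (σ j) = Hmat l0 i s k j := by
  unfold Hmat
  split_ifs <;> simp [Tmat, Fmat, permSeq]

lemma Xmat_perm {p t : ℕ} (l0 : ℝ) (i : Fin 2) (σ : Equiv.Perm (Fin t)) (s : TrtSeq p t)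
    (k : Fin p) (j : Fin t) : Xmat l0 i (permSeq σ s) k (σ j) = Xmat l0 i s k j := by
  simp only [Xmat, Matrix.mul_apply]
  rw [← Equiv.sum_comp σ]
  simp only [Hmat_perm, Bmat_perm]

lemma Xmat_row {p t : ℕ} (ht : 3 ≤ t) (l0 : ℝ) (i : Fin 2) (s : TrtSeq p t)
    (k : Fin p) : ∑ j, Xmat l0 i s k j = 0 := by
  simp only [Xmat, Matrix.mul_apply]
  rw [Finset.sum_comm]
  simp [← Finset.mul_sum, Bmat_row ht]

lemma Ahat_perm {p t : ℕ} (S : Matrix (Fin p) (Fin p) ℝ) (l0 : ℝ) (i j : Fin 2)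
    (σ : Equiv.Perm (Fin t)) (s : TrtSeq p t) (a b : Fin t) :
    Ahat S l0 (permSeq σ s) i j (σ a) (σ b) = Ahat S l0 s i j a b := by
  simp only [Ahat_eq, Matrix.mul_apply, Matrix.transpose_apply, Xmat_perm]

lemma Ahat_row {p t : ℕ} (ht : 3 ≤ t) (S : Matrix (Fin p) (Fin p) ℝ) (l0 : ℝ) (i j : Fin 2)
    (s : TrtSeq p t) (a : Fin t) : ∑ b, Ahat S l0 s i j a b = 0 := by
  have h : ∀ b, Ahat S l0 s i j a b =
      ∑ k, ((Xmat l0 i s)ᵀ * Btil S) a k * Xmat l0 j s k b := fun b => by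
    rw [Ahat_eq, Matrix.mul_apply]
  simp only [h]
  rw [Finset.sum_comm]
  simp [← Finset.mul_sum, Xmat_row ht]

lemma hseq_perm {p t : ℕ} (S : Matrix (Fin p) (Fin p) ℝ) (l0 : ℝ) (i j : Fin 2)
    (σ : Equiv.Perm (Fin t)) (s : TrtSeq p t) :
    hseq S l0 (permSeq σ s) i j = hseq S l0 s i j := by
  simp only [hseq, Matrix.trace, Matrix.diag]
  rw [← Equiv.sum_comp σ]
  simp only [Ahat_perm]

/-- Relabelling as an equivalence. -/
def permE {p t : ℕ} (σ : Equiv.Perm (Fin t)) : TrtSeq p t ≃ TrtSeq p t where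
  toFun := permSeq σ
  invFun := permSeq σ⁻¹
  left_inv s := by funext k; simp [permSeq]
  right_inv s := by funext k; simp [permSeq]

lemma sum_permSeq {p t : ℕ} {β : Type*} [AddCommMonoid β] (σ : Equiv.Perm (Fin t))
    (φ : TrtSeq p t → β) : ∑ s, φ (permSeq σ s) = ∑ s, φ s :=
  Equiv.sum_comp (permE σ) φ

lemma sum_symmetrize {p t : ℕ} (w φ : TrtSeq p t → ℝ)
    (hφ : ∀ (σ : Equiv.Perm (Fin t)) s, φ (permSeq σ s) = φ s) :
    ∑ s, symmetrize w s * φ s = ∑ s, w s * φ s := by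
  have h1 : ∀ σ : Equiv.Perm (Fin t), ∑ s, permDesign σ w s * φ s = ∑ s, w s * φ s := by
    intro σ
    rw [← sum_permSeq σ⁻¹ fun s => w s * φ s]
    simp only [hφ, permDesign]
  simp only [symmetrize, mul_assoc, ← Finset.mul_sum, Finset.sum_mul]
  rw [Finset.sum_comm]
  simp only [h1, Finset.sum_const, Finset.card_univ, Fintype.card_perm, Fintype.card_fin,
    nsmul_eq_mul]
  rw [← mul_assoc, inv_mul_cancel₀ (by positivity), one_mul]

lemma symmetrize_design {p t : ℕ} (w : TrtSeq p t → ℝ) (hw : IsDesign w) :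
    IsDesign (symmetrize w) := by
  refine ⟨fun s => ?_, ?_⟩
  · exact mul_nonneg (by positivity) (Finset.sum_nonneg fun σ _ => hw.1 _)
  · simpa [hw.2] using sum_symmetrize w (fun _ => 1) (fun _ _ => rfl)

lemma symmetrize_symm {p t : ℕ} (w : TrtSeq p t → ℝ) : IsSymmetricDesign (symmetrize w) := by
  intro σ s
  simp only [symmetrize]
  congr 1
  rw [← Equiv.sum_comp (Equiv.mulLeft σ)]
  refine Finset.sum_congr rfl fun τ _ => ?_
  simp only [permDesign]
  congr 1
  funext k
  simp [permSeq]

lemma Mmat_symm {p t : ℕ} (ht : 3 ≤ t) (l0 : ℝ) (w : TrtSeq p t → ℝ) (hw : IsSymmetricDesign w)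
    (i : Fin 2) : Mmat l0 w i = 0 := by
  have happ : ∀ k j, Mmat l0 w i k j = ∑ s, w s * Xmat l0 i s k j := fun k j => by
    simp [Mmat, Matrix.sum_apply]
  have hinv : ∀ (σ : Equiv.Perm (Fin t)) k j, Mmat l0 w i k (σ j) = Mmat l0 w i k j := by
    intro σ k j
    rw [happ, happ, ← sum_permSeq σ]
    simp only [Xmat_perm, hw σ]
  have hrow : ∀ k, ∑ j, Mmat l0 w i k j = 0 := fun k => by
    simp only [happ]
    rw [Finset.sum_comm]
    simp [← Finset.mul_sum, Xmat_row ht]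
  ext k j
  have hc : ∀ j', Mmat l0 w i k j' = Mmat l0 w i k j := fun j' => by
    simpa using hinv (Equiv.swap j j') k j
  have h := hrow k
  simp only [hc, Finset.sum_const, Finset.card_univ, Fintype.card_fin, nsmul_eq_mul] at h
  have ht0 : (t : ℝ) ≠ 0 := by positivity
  simpa [ht0] using h

lemma AD_symm {p t : ℕ} (ht : 3 ≤ t) (n : ℕ) (S : Matrix (Fin p) (Fin p) ℝ) (l0 : ℝ)
    (w : TrtSeq p t → ℝ) (hw : IsSymmetricDesign w) (i j : Fin 2) :
    AD n S l0 w i j = ((AD n S l0 w i j).trace / ((t : ℝ) - 1)) • Bmat t := by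
  have e : AD n S l0 w i j = (n : ℝ) • ∑ s, w s • Ahat S l0 s i j := by
    rw [AD_eq, Mmat_symm ht l0 w hw, Mmat_symm ht l0 w hw]
    simp [Ahat_eq]
  have happ : ∀ a b, AD n S l0 w i j a b = n * ∑ s, w s * Ahat S l0 s i j a b := fun a b => by
    rw [e]; simp [Matrix.sum_apply]
  apply perm_inv_matrix ht
  · intro σ a b
    rw [happ, happ, ← sum_permSeq σ]
    simp only [Ahat_perm, hw σ]
  · intro a
    simp only [happ, ← Finset.mul_sum]
    rw [Finset.sum_comm]
    simp [← Finset.mul_sum, Ahat_row ht]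

lemma AD_symm_trace {p t : ℕ} (ht : 3 ≤ t) (n : ℕ) (S : Matrix (Fin p) (Fin p) ℝ) (l0 : ℝ)
    (w : TrtSeq p t → ℝ) (hw : IsSymmetricDesign w) (i j : Fin 2) :
    (AD n S l0 w i j).trace = n * ∑ s, w s * hseq S l0 s i j := by
  rw [AD_eq, Mmat_symm ht l0 w hw, Mmat_symm ht l0 w hw]
  simp [hseq, Ahat_eq, Matrix.trace_sum]

lemma exists_optimal {p t : ℕ} (ht : 3 ≤ t) (n : ℕ) (S : Matrix (Fin p) (Fin p) ℝ)
    (hS : S.PosDef) (l0 : ℝ) :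
    ∃ w : TrtSeq p t → ℝ, IsDesign w ∧ ∃ G, IsGInv (AD n S l0 w 1 1) G ∧
      (n : ℝ) * yZero p t S l0 ≤ (ADfun n S l0 w G).trace := by
  obtain ⟨w0, hw0, hmin⟩ := exists_minimax (p := p) ht S hS l0
  set w := symmetrize w0 with hwdef
  have hw := symmetrize_design w0 hw0
  have hsym := symmetrize_symm w0
  rw [← hwdef] at hw hsym
  have hr : ∀ x, ∑ s, w s * rSeq S l0 s x = ∑ s, w0 s * rSeq S l0 s x := fun x =>
    sum_symmetrize w0 _ fun σ s => by simp only [rSeq, hseq_perm]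
  have ht1 : (t : ℝ) - 1 ≠ 0 := by
    have : (3 : ℝ) ≤ t := by exact_mod_cast ht
    linarith
  have h00 := AD_symm ht n S l0 w hsym 0 0
  have h01 := AD_symm ht n S l0 w hsym 0 1
  have h11 := AD_symm ht n S l0 w hsym 1 1
  have c00 := AD_symm_trace ht n S l0 w hsym 0 0
  have c01 := AD_symm_trace ht n S l0 w hsym 0 1
  have c11 := AD_symm_trace ht n S l0 w hsym 1 1
  set a := (AD n S l0 w 0 0).trace
  set b := (AD n S l0 w 0 1).trace
  set c := (AD n S l0 w 1 1).trace
  refine ⟨w, hw, (c / ((t : ℝ) - 1))⁻¹ • Bmat t, ?_, ?_⟩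
  · rw [IsGInv, h11]
    simp only [Matrix.smul_mul, Matrix.mul_smul, Bmat_mul_Bmat, smul_smul]
    congr 1
    by_cases hc : c = 0
    · simp [hc]
    · field_simp
  · have hx := hmin (-b / c)
    rw [← hr] at hx
    have hx' := mul_le_mul_of_nonneg_left hx (Nat.cast_nonneg (α := ℝ) n)
    refine hx'.trans (le_of_eq ?_)
    have e : ∀ x, (n : ℝ) * ∑ s, w s * rSeq S l0 s x = a + 2 * b * x + c * x ^ 2 := by
      intro x
      rw [c00, c01, c11]
      simp only [rSeq, Finset.mul_sum, Finset.sum_mul, ← Finset.sum_add_distrib]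
      exact Finset.sum_congr rfl fun s _ => by ring
    rw [e, ADfun, h00, h01]
    simp only [Matrix.transpose_smul, Bmat_transpose, Matrix.smul_mul, Matrix.mul_smul,
      Bmat_mul_Bmat, smul_smul, Matrix.trace_sub, Matrix.trace_smul, Bmat_trace t ht, smul_eq_mul]
    by_cases hc : c = 0
    · simp [hc, ht1]
    · field_simp
      ring

lemma ADfun_mul_Bmat {p t : ℕ} (n : ℕ) (S : Matrix (Fin p) (Fin p) ℝ) (l0 : ℝ)
    (w : TrtSeq p t → ℝ) (G : Matrix (Fin t) (Fin t) ℝ) :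
    ADfun n S l0 w G * Bmat t = ADfun n S l0 w G := by
  have hX : ∀ (i : Fin 2) (s : TrtSeq p t), Xmat l0 i s * Bmat t = Xmat l0 i s := fun i s => by
    rw [Xmat, Matrix.mul_assoc, Bmat_mul_Bmat]
  have hM : ∀ i : Fin 2, Mmat l0 w i * Bmat t = Mmat l0 w i := fun i => by
    simp only [Mmat, Matrix.sum_mul, Matrix.smul_mul, hX]
  have hXT : ∀ (i : Fin 2) (s : TrtSeq p t), Bmat t * (Xmat l0 i s)ᵀ = (Xmat l0 i s)ᵀ :=
    fun i s => by
      rw [← congrArg Matrix.transpose (hX i s), Matrix.transpose_mul, Bmat_transpose,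
        ← Matrix.mul_assoc, Bmat_mul_Bmat]
  have hMT : ∀ (i : Fin 2), Bmat t * (Mmat l0 w i)ᵀ = (Mmat l0 w i)ᵀ :=
    fun i => by
      rw [← congrArg Matrix.transpose (hM i), Matrix.transpose_mul, Bmat_transpose,
        ← Matrix.mul_assoc, Bmat_mul_Bmat]
  have hR : AD n S l0 w 0 0 * Bmat t = AD n S l0 w 0 0 := by
    simp only [AD_eq, Matrix.sub_mul, Matrix.smul_mul, Matrix.sum_mul, Matrix.mul_assoc, hX, hM]
  have hL : Bmat t * AD n S l0 w 0 1 = AD n S l0 w 0 1 := by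
    simp only [AD_eq, Matrix.mul_sub, Matrix.mul_smul, Matrix.mul_sum, ← Matrix.mul_assoc,
      hXT, hMT]
  have hLT : (AD n S l0 w 0 1)ᵀ * Bmat t = (AD n S l0 w 0 1)ᵀ := by
    have := congrArg Matrix.transpose hL
    rwa [Matrix.transpose_mul, Bmat_transpose] at this
  rw [ADfun, Matrix.sub_mul, hR, Matrix.mul_assoc, hLT]

lemma integral_quad {t : ℕ} (ht : 3 ≤ t) (g : Measure (Fin t → ℝ)) (hg : IsExchangeablePrior g)
    (hmom : Integrable (fun τ : Fin t → ℝ => τ ⬝ᵥ τ) g)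
    (A : Matrix (Fin t) (Fin t) ℝ) (hA : A * Bmat t = A) :
    ∫ τ, τ ⬝ᵥ (A *ᵥ τ) ∂g = (∫ τ, τ ⬝ᵥ τ ∂g) * A.trace / ((t : ℝ) - 1) := by
  obtain ⟨hprob, hsupp, hinv⟩ := hg
  have hae : ∀ᵐ τ : Fin t → ℝ ∂g, ∑ i, τ i = 0 := by
    have : ∀ᵐ τ : Fin t → ℝ ∂g, (∑ i, τ i) = 0 ∧ τ ≠ 0 := by
      rw [ae_iff]; exact hsupp
    exact this.mono fun τ h => h.1
  have hint : ∀ i j, Integrable (fun τ : Fin t → ℝ => τ i * τ j) g := by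
    intro i j
    refine hmom.mono' (by fun_prop) (Filter.Eventually.of_forall fun τ => ?_)
    have hle : ∀ i, τ i * τ i ≤ τ ⬝ᵥ τ := fun i =>
      Finset.single_le_sum (f := fun i => τ i * τ i) (fun _ _ => mul_self_nonneg _)
        (Finset.mem_univ i)
    have h1 := hle i
    have h2 := hle j
    rw [Real.norm_eq_abs, abs_le]
    constructor <;> nlinarith [sq_nonneg (τ i + τ j), sq_nonneg (τ i - τ j)]
  let M : Matrix (Fin t) (Fin t) ℝ := Matrix.of fun i j => ∫ τ : Fin t → ℝ, τ i * τ j ∂g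
  have hMtr : M.trace = ∫ τ, τ ⬝ᵥ τ ∂g := by
    simp only [M, Matrix.trace, Matrix.diag, Matrix.of_apply, dotProduct]
    rw [integral_finsetSum _ fun i _ => hint i i]
  have hM := perm_inv_matrix ht M (by
    intro σ i j
    simp only [M, Matrix.of_apply]
    have hm : Measurable (fun (τ : Fin t → ℝ) i => τ (σ i)) := by fun_prop
    conv_rhs => rw [← hinv σ]
    rw [integral_map hm.aemeasurable (by fun_prop)]) (by
    intro i
    simp only [M, Matrix.of_apply]
    rw [← integral_finsetSum _ fun j _ => hint i j]
    rw [← integral_zero (Fin t → ℝ) ℝ (μ := g)]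
    refine integral_congr_ae (hae.mono fun τ h => ?_)
    simp only [← Finset.mul_sum, h, mul_zero])
  have e : ∫ τ, τ ⬝ᵥ (A *ᵥ τ) ∂g = (A * M).trace := by
    have h1 : ∀ τ : Fin t → ℝ, τ ⬝ᵥ (A *ᵥ τ) = ∑ i, ∑ j, A i j * (τ j * τ i) := fun τ => by
      simp only [dotProduct, Matrix.mulVec, Finset.mul_sum]
      exact Finset.sum_congr rfl fun i _ => Finset.sum_congr rfl fun j _ => by ring
    simp only [h1, M, Matrix.trace, Matrix.diag, Matrix.mul_apply, Matrix.of_apply]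
    rw [integral_finsetSum _ fun i _ => integrable_finsetSum _ fun j _ => (hint j i).const_mul (A i j)]
    refine Finset.sum_congr rfl fun i _ => ?_
    rw [integral_finsetSum _ fun j _ => (hint j i).const_mul (A i j)]
    exact Finset.sum_congr rfl fun j _ => integral_const_mul _ _
  rw [e, hM, Matrix.mul_smul, hA, Matrix.trace_smul, hMtr, smul_eq_mul]
  ring

end Helpers

/-- the Bayes Fisher information for `λ` equals
`(∫ τ'τ dg) tr(A_d(G))/(t-1)`, is independent of the generalized inverse, and is
maximized exactly when `tr(A_d(G)) = n y_0`. -/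
theorem stmt18 (p t n : ℕ) (hp : 2 ≤ p) (ht : 3 ≤ t) (hn : 1 ≤ n)
    (S : Matrix (Fin p) (Fin p) ℝ) (hS : S.PosDef) (l0 : ℝ)
    (g : Measure (Fin t → ℝ)) (hg : IsExchangeablePrior g)
    (hmom : Integrable (fun τ : Fin t → ℝ => τ ⬝ᵥ τ) g)
    (hmompos : 0 < ∫ τ, τ ⬝ᵥ τ ∂g)
    (w : TrtSeq p t → ℝ) (hw : IsDesign w)
    (G : Matrix (Fin t) (Fin t) ℝ) (hG : IsGInv (AD n S l0 w 1 1) G) :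
    (∫ τ, τ ⬝ᵥ (ADfun n S l0 w G *ᵥ τ) ∂g =
      (∫ τ, τ ⬝ᵥ τ ∂g) * (ADfun n S l0 w G).trace / ((t : ℝ) - 1)) ∧
    (∀ G1 G2 : Matrix (Fin t) (Fin t) ℝ,
      IsGInv (AD n S l0 w 1 1) G1 → IsGInv (AD n S l0 w 1 1) G2 →
      ∫ τ, τ ⬝ᵥ (ADfun n S l0 w G1 *ᵥ τ) ∂g = ∫ τ, τ ⬝ᵥ (ADfun n S l0 w G2 *ᵥ τ) ∂g) ∧
    ((∀ w' : TrtSeq p t → ℝ, IsDesign w' →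
        ∀ G' : Matrix (Fin t) (Fin t) ℝ, IsGInv (AD n S l0 w' 1 1) G' →
        ∫ τ, τ ⬝ᵥ (ADfun n S l0 w' G' *ᵥ τ) ∂g ≤
          ∫ τ, τ ⬝ᵥ (ADfun n S l0 w G *ᵥ τ) ∂g) ↔
      (ADfun n S l0 w G).trace = (n : ℝ) * yZero p t S l0) := by
  have hI : ∀ (w' : TrtSeq p t → ℝ) (G' : Matrix (Fin t) (Fin t) ℝ),
      ∫ τ, τ ⬝ᵥ (ADfun n S l0 w' G' *ᵥ τ) ∂g =
        (∫ τ, τ ⬝ᵥ τ ∂g) * (ADfun n S l0 w' G').trace / ((t : ℝ) - 1) := fun w' G' =>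
    integral_quad ht g hg hmom _ (ADfun_mul_Bmat n S l0 w' G')
  have ht1 : (0 : ℝ) < (t : ℝ) - 1 := by
    have : (3 : ℝ) ≤ t := by exact_mod_cast ht
    linarith
  refine ⟨hI w G, fun G1 G2 h1 h2 => ?_, fun h => ?_, fun h w' hw' G' hG' => ?_⟩
  · rw [ADfun_unique n S hS l0 w hw G1 G2 h1 h2]
  · refine le_antisymm (trace_le_yZero n S hS l0 w hw G hG) ?_
    obtain ⟨w', hw', G', hG', hle⟩ := exists_optimal (p := p) ht n S hS l0
    have h1 := h w' hw' G' hG'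
    rw [hI, hI, div_le_div_iff_of_pos_right ht1, mul_le_mul_iff_right₀ hmompos] at h1
    exact hle.trans h1
  · rw [hI, hI, div_le_div_iff_of_pos_right ht1, mul_le_mul_iff_right₀ hmompos, h]
    exact trace_le_yZero n S hS l0 w' hw' G' hG'
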